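/- Let F be the Minkowskian product of Finsler metrics F₁ and F₂ with respect to a product function f. Then at every point (x,y) = ((x₁,x₂),(y₁,y₂)) with y₁ ≠ 0 and y₂ ≠ 0, the mean Landsberg curvature J_α = 2·G^{βγ}·L_{αβγ} of F satisfies: J_i(x,y) = J¹_i(x₁,y₁) for every index i in the first block, and J_{i'}(x,y) = J²_{i'}(x₂,y₂) for every index i' in the second block, where J¹ and J² are the mean Landsberg curvatures of F₁ and F₂. -/

import Mathlib

open Matrix

/-- Partial derivative in the fiber variable `y` in the direction of the `α`-th
coordinate, for a function `g (x, y)` of a base point and a fiber vector. -/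
noncomputable def pdy {ι : Type*} [Fintype ι] [DecidableEq ι]
    (g : (ι → ℝ) → (ι → ℝ) → ℝ) (α : ι) : (ι → ℝ) → (ι → ℝ) → ℝ :=
  fun x y => fderiv ℝ (g x) y (Pi.single α 1)

/-- Partial derivative in the base variable `x` in the direction of the `γ`-th
coordinate, for a function `g (x, y)` of a base point and a fiber vector. -/
noncomputable def pdx {ι : Type*} [Fintype ι] [DecidableEq ι]
    (g : (ι → ℝ) → (ι → ℝ) → ℝ) (γ : ι) : (ι → ℝ) → (ι → ℝ) → ℝ :=
  fun x y => fderiv ℝ (fun x' => g x' y) x (Pi.single γ 1)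

/-- The fundamental tensor `(G_{αβ}) = (∂²(F²)/∂y^α∂y^β)` of a Finsler metric `F`. -/
noncomputable def fundTensor {ι : Type*} [Fintype ι] [DecidableEq ι]
    (F : (ι → ℝ) → (ι → ℝ) → ℝ) (x y : ι → ℝ) : Matrix ι ι ℝ :=
  fun α β => pdy (pdy (fun x' y' => (F x' y') ^ 2) β) α x y

/-- `F` is a Finsler metric on the open set `U`: `G = F²` is smooth on the slit
domain, `F` is positive for `y ≠ 0`, absolutely 1-homogeneous in `y`, and its
fundamental tensor is positive definite for `y ≠ 0`. -/
structure IsFinslerMetric {ι : Type*} [Fintype ι] [DecidableEq ι]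
    (U : Set (ι → ℝ)) (F : (ι → ℝ) → (ι → ℝ) → ℝ) : Prop where
  isOpen : IsOpen U
  smooth : ContDiffOn ℝ (⊤ : ℕ∞) (fun p : (ι → ℝ) × (ι → ℝ) => (F p.1 p.2) ^ 2)
    (U ×ˢ {y | y ≠ 0})
  pos : ∀ x ∈ U, ∀ y : ι → ℝ, y ≠ 0 → 0 < F x y
  homog : ∀ x ∈ U, ∀ (y : ι → ℝ) (c : ℝ), F x (c • y) = |c| * F x y
  posDef : ∀ x ∈ U, ∀ y : ι → ℝ, y ≠ 0 → (fundTensor F x y).PosDef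

/-- The geodesic spray coefficients
`𝔾^α = ½ G^{αβ}(∂²G/∂y^β∂x^γ · y^γ − ∂G/∂x^β)` of a Finsler metric `F`. -/
noncomputable def spray {ι : Type*} [Fintype ι] [DecidableEq ι]
    (F : (ι → ℝ) → (ι → ℝ) → ℝ) (α : ι) : (ι → ℝ) → (ι → ℝ) → ℝ :=
  fun x y => (1 / 2) * ∑ β, (fundTensor F x y)⁻¹ α β *
    ((∑ γ, pdx (pdy (fun x' y' => (F x' y') ^ 2) β) γ x y * y γ) -
      pdx (fun x' y' => (F x' y') ^ 2) β x y)

/-- The Cartan nonlinear connection coefficients `Γ^α_β = ∂𝔾^α/∂y^β`. -/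
noncomputable def nonlinConn {ι : Type*} [Fintype ι] [DecidableEq ι]
    (F : (ι → ℝ) → (ι → ℝ) → ℝ) (α β : ι) : (ι → ℝ) → (ι → ℝ) → ℝ :=
  pdy (spray F α) β

/-- The Berwald connection coefficients `Γ̌^α_{β;γ} = ∂Γ^α_γ/∂y^β = ∂²𝔾^α/∂y^β∂y^γ`. -/
noncomputable def berwaldConn {ι : Type*} [Fintype ι] [DecidableEq ι]
    (F : (ι → ℝ) → (ι → ℝ) → ℝ) (α β γ : ι) : (ι → ℝ) → (ι → ℝ) → ℝ :=
  pdy (nonlinConn F α γ) β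

/-- The Berwald curvature `B^α_{βγη} = ∂³𝔾^α/∂y^β∂y^γ∂y^η`. -/
noncomputable def berwaldCurv {ι : Type*} [Fintype ι] [DecidableEq ι]
    (F : (ι → ℝ) → (ι → ℝ) → ℝ) (α β γ η : ι) : (ι → ℝ) → (ι → ℝ) → ℝ :=
  pdy (pdy (pdy (spray F α) η) γ) β

/-- The mean Berwald curvature `E_{βγ} = ½ B^α_{βγα}` (sum over `α`). -/
noncomputable def meanBerwaldCurv {ι : Type*} [Fintype ι] [DecidableEq ι]
    (F : (ι → ℝ) → (ι → ℝ) → ℝ) (β γ : ι) : (ι → ℝ) → (ι → ℝ) → ℝ :=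
  fun x y => (1 / 2) * ∑ α, berwaldCurv F α β γ α x y

/-- The Landsberg curvature `L_{βγη} = −¼ y^ν G_{να} B^α_{βγη}` (sums over `ν, α`). -/
noncomputable def landsbergCurv {ι : Type*} [Fintype ι] [DecidableEq ι]
    (F : (ι → ℝ) → (ι → ℝ) → ℝ) (β γ η : ι) : (ι → ℝ) → (ι → ℝ) → ℝ :=
  fun x y => -(1 / 4) * ∑ ν, ∑ α, y ν * fundTensor F x y ν α * berwaldCurv F α β γ η x y

/-- The mean Landsberg curvature `J_α = 2 G^{βγ} L_{αβγ}` (sums over `β, γ`). -/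
noncomputable def meanLandsbergCurv {ι : Type*} [Fintype ι] [DecidableEq ι]
    (F : (ι → ℝ) → (ι → ℝ) → ℝ) (α : ι) : (ι → ℝ) → (ι → ℝ) → ℝ :=
  fun x y => 2 * ∑ β, ∑ γ, (fundTensor F x y)⁻¹ β γ * landsbergCurv F α β γ x y

/-- Partial derivative of `f : ℝ → ℝ → ℝ` with respect to the first variable. -/
noncomputable def pderivS (f : ℝ → ℝ → ℝ) (s t : ℝ) : ℝ := deriv (fun u => f u t) s

/-- Partial derivative of `f : ℝ → ℝ → ℝ` with respect to the second variable. -/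
noncomputable def pderivT (f : ℝ → ℝ → ℝ) (s t : ℝ) : ℝ := deriv (fun v => f s v) t

/-- `f_st = ∂²f/∂s∂t`. -/
noncomputable def pderivST (f : ℝ → ℝ → ℝ) (s t : ℝ) : ℝ :=
  deriv (fun u => pderivT f u t) s

/-- The data of a Minkowskian product: `F₁, F₂` are Finsler metrics on `U₁, U₂`,
`f` is an admissible product function, and `F = √(f(F₁², F₂²))` is the Minkowskian
product metric, itself assumed to be a Finsler metric on `U₁ × U₂`. -/
structure IsMinkowskianProduct {m n : ℕ}
    (U₁ : Set (Fin m → ℝ)) (U₂ : Set (Fin n → ℝ))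
    (F₁ : (Fin m → ℝ) → (Fin m → ℝ) → ℝ) (F₂ : (Fin n → ℝ) → (Fin n → ℝ) → ℝ)
    (f : ℝ → ℝ → ℝ)
    (F : (Fin m ⊕ Fin n → ℝ) → (Fin m ⊕ Fin n → ℝ) → ℝ) : Prop where
  finsler₁ : IsFinslerMetric U₁ F₁
  finsler₂ : IsFinslerMetric U₂ F₂
  f_cont : ContinuousOn (fun p : ℝ × ℝ => f p.1 p.2) (Set.Ici 0 ×ˢ Set.Ici 0)
  f_nonneg : ∀ s ∈ Set.Ici (0 : ℝ), ∀ t ∈ Set.Ici (0 : ℝ), 0 ≤ f s t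
  f_zero_iff : ∀ s ∈ Set.Ici (0 : ℝ), ∀ t ∈ Set.Ici (0 : ℝ),
    (f s t = 0 ↔ s = 0 ∧ t = 0)
  f_homog : ∀ c ∈ Set.Ici (0 : ℝ), ∀ s ∈ Set.Ici (0 : ℝ), ∀ t ∈ Set.Ici (0 : ℝ),
    f (c * s) (c * t) = c * f s t
  f_smooth : ContDiffOn ℝ (⊤ : ℕ∞) (fun p : ℝ × ℝ => f p.1 p.2)
    (Set.Ioi 0 ×ˢ Set.Ioi 0)
  fs_ne : ∀ s > (0 : ℝ), ∀ t > (0 : ℝ), pderivS f s t ≠ 0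
  ft_ne : ∀ s > (0 : ℝ), ∀ t > (0 : ℝ), pderivT f s t ≠ 0
  delta_ne : ∀ s > (0 : ℝ), ∀ t > (0 : ℝ),
    pderivS f s t * pderivT f s t - 2 * f s t * pderivST f s t ≠ 0
  F_def : ∀ (x y : Fin m ⊕ Fin n → ℝ),
    F x y = Real.sqrt (f ((F₁ (x ∘ Sum.inl) (y ∘ Sum.inl)) ^ 2)
      ((F₂ (x ∘ Sum.inr) (y ∘ Sum.inr)) ^ 2))
  finsler : IsFinslerMetric
    {x : Fin m ⊕ Fin n → ℝ | (x ∘ Sum.inl) ∈ U₁ ∧ (x ∘ Sum.inr) ∈ U₂} F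

/-!
The geodesics of `F` are the solutions of the Euler–Lagrange equations of `F² = f (F₁², F₂²)`.
Along a pair of geodesics of `F₁` and `F₂` both energies are conserved, so the factors `f_s` and
`f_t` appearing in these equations are constant and the equations split. Hence the spray of `F` is
the direct sum of the two sprays, and the Berwald curvature is block diagonal. Since
`y^ν G_{να} = ∂F²/∂y^α`, the Landsberg curvature of `F` on a block is that of the factor times
`f_s` (first block) or `f_t` (second block).
The fundamental tensor of `F` is not block diagonal, but on the columns of the first block it is
`f_s` times that of `F₁` plus a rank-one term along `∂F₁²/∂y`. This term does not contribute to
the trace defining the mean Landsberg curvature, because the Landsberg curvature is annihilated by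
`y`, and the factor `f_s` cancels. The second block is symmetric.
-/

section

open Filter Function Topology
open scoped ContDiff

/-! ### Partial derivatives -/

section PartialDerivatives

theorem contDiffAt_uncurry_flip {E : Type*} [NormedAddCommGroup E] [NormedSpace ℝ E]
    {g : E → E → ℝ} {x y : E} {n : WithTop ℕ∞} (hg : ContDiffAt ℝ n (uncurry g) (x, y)) :
    ContDiffAt ℝ n (uncurry (flip g)) (y, x) :=
  ContDiffAt.comp (y, x) (f := Prod.swap) hg (contDiff_snd.prodMk contDiff_fst).contDiffAt

theorem differentiableAt_slice {E : Type*} [NormedAddCommGroup E] [NormedSpace ℝ E]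
    {g : E → E → ℝ} {x y : E} (hg : DifferentiableAt ℝ (uncurry g) (x, y)) :
    DifferentiableAt ℝ (g x) y :=
  DifferentiableAt.comp (f := fun y' => (x, y')) y hg (by fun_prop)

variable {ι : Type*} [Fintype ι] [DecidableEq ι] {g h : (ι → ℝ) → (ι → ℝ) → ℝ} {x y : ι → ℝ}
  {m n : WithTop ℕ∞}

theorem contDiffAt_pdy (hg : ContDiffAt ℝ n (uncurry g) (x, y)) (hmn : m + 1 ≤ n) (α : ι) :
    ContDiffAt ℝ m (uncurry (pdy g α)) (x, y) := by
  have hslice : ContDiffAt ℝ n (uncurry fun (p : (ι → ℝ) × (ι → ℝ)) y' => g p.1 y') ((x, y), y) :=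
    ContDiffAt.comp ((x, y), y) (f := fun q : ((ι → ℝ) × (ι → ℝ)) × (ι → ℝ) => (q.1.1, q.2)) hg
      (by fun_prop)
  exact (hslice.fderiv contDiffAt_snd hmn).clm_apply contDiffAt_const

theorem contDiffAt_pdx (hg : ContDiffAt ℝ n (uncurry g) (x, y)) (hmn : m + 1 ≤ n) (γ : ι) :
    ContDiffAt ℝ m (uncurry (pdx g γ)) (x, y) :=
  contDiffAt_uncurry_flip (contDiffAt_pdy (contDiffAt_uncurry_flip hg) hmn γ)

theorem eventuallyEq_pdy (hgh : uncurry g =ᶠ[𝓝 (x, y)] uncurry h) (α : ι) :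
    uncurry (pdy g α) =ᶠ[𝓝 (x, y)] uncurry (pdy h α) := by
  filter_upwards [hgh.eventually_nhds] with ⟨x', y'⟩ hp
  have hslice : g x' =ᶠ[𝓝 y'] h x' :=
    (Continuous.prodMk_right x').continuousAt.eventually (f := fun y => (x', y)) hp
  simp only [uncurry, pdy, hslice.fderiv_eq]

theorem eventuallyEq_pdx (hgh : uncurry g =ᶠ[𝓝 (x, y)] uncurry h) (γ : ι) :
    uncurry (pdx g γ) =ᶠ[𝓝 (x, y)] uncurry (pdx h γ) := by
  have hflip : uncurry (flip g) =ᶠ[𝓝 (y, x)] uncurry (flip h) :=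
    (continuous_swap.tendsto (y, x)).eventually hgh
  exact (continuous_swap.tendsto (x, y)).eventually (eventuallyEq_pdy hflip γ)

theorem pdy_comm (hg : ContDiffAt ℝ 2 (uncurry g) (x, y)) (α β : ι) :
    pdy (pdy g α) β x y = pdy (pdy g β) α x y := by
  have hslice : ContDiffAt ℝ 2 (g x) y :=
    ContDiffAt.comp y (f := fun y' => (x, y')) hg (by fun_prop)
  have hdiff : DifferentiableAt ℝ (fderiv ℝ (g x)) y :=
    (hslice.fderiv_right (m := 1) (by norm_num)).differentiableAt (by simp)
  have hsnd : ∀ a b : ι, pdy (pdy g a) b x y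
      = fderiv ℝ (fderiv ℝ (g x)) y (Pi.single b 1) (Pi.single a 1) := fun a b => by
    change fderiv ℝ (fun y' => fderiv ℝ (g x) y' (Pi.single a 1)) y (Pi.single b 1) = _
    rw [fderiv_clm_apply hdiff (by fun_prop)]
    simp
  rw [hsnd, hsnd]
  exact hslice.isSymmSndFDerivAt (by simp) _ _

theorem pdy_mul (hg : DifferentiableAt ℝ (uncurry g) (x, y))
    (hh : DifferentiableAt ℝ (uncurry h) (x, y)) (α : ι) :
    pdy (fun x y => g x y * h x y) α x y = g x y * pdy h α x y + h x y * pdy g α x y :=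
  congrArg (fun L => L (Pi.single α 1))
    (fderiv_fun_mul (differentiableAt_slice hg) (differentiableAt_slice hh))

theorem sum_mul_pdy (v : ι → ℝ) : ∑ α, v α * pdy g α x y = fderiv ℝ (g x) y v := by
  conv_rhs => rw [pi_eq_sum_univ' v]
  simp [pdy]

theorem sum_mul_pdx (v : ι → ℝ) :
    ∑ γ, v γ * pdx g γ x y = fderiv ℝ (fun x' => g x' y) x v :=
  sum_mul_pdy (g := flip g) v

end PartialDerivatives

/-! ### Positive homogeneity in the fiber variable -/

section Homogeneity

variable {ι : Type*} {U : Set (ι → ℝ)} {g : (ι → ℝ) → (ι → ℝ) → ℝ} {d : ℕ}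

/-- `g (x, y)` is positively homogeneous of degree `d` in the fiber variable `y`, for every base
point `x ∈ U`. -/
def IsPosHomogeneousOn (U : Set (ι → ℝ)) (d : ℕ) (g : (ι → ℝ) → (ι → ℝ) → ℝ) : Prop :=
  ∀ x ∈ U, ∀ y : ι → ℝ, ∀ c : ℝ, 0 < c → g x (c • y) = c ^ d * g x y

namespace IsPosHomogeneousOn

theorem fderiv_self [Finite ι] {x y : ι → ℝ} (hg : IsPosHomogeneousOn U d g) (hx : x ∈ U)
    (hd : DifferentiableAt ℝ (g x) y) : fderiv ℝ (g x) y y = d * g x y := by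
  have := Fintype.ofFinite ι
  have hray : HasDerivAt (fun c : ℝ => g x (c • y)) (fderiv ℝ (g x) y y) 1 := by
    have hline : HasDerivAt (fun c : ℝ => c • y) y 1 := by
      simpa using (hasDerivAt_id (1 : ℝ)).smul_const y
    exact HasFDerivAt.comp_hasDerivAt 1 (by simpa using hd.hasFDerivAt) hline
  have hpow : HasDerivAt (fun c : ℝ => c ^ d * g x y) (d * g x y) 1 := by
    simpa using (hasDerivAt_pow d (1 : ℝ)).mul_const (g x y)
  have heq : (fun c : ℝ => g x (c • y)) =ᶠ[𝓝 1] fun c : ℝ => c ^ d * g x y := by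
    filter_upwards [lt_mem_nhds zero_lt_one] with c hc using hg x hx y c hc
  exact (hray.congr_of_eventuallyEq heq.symm).unique hpow

variable [Fintype ι] [DecidableEq ι]

theorem sum_mul_pdy_self {x y : ι → ℝ} (hg : IsPosHomogeneousOn U d g) (hx : x ∈ U)
    (hd : DifferentiableAt ℝ (uncurry g) (x, y)) : ∑ α, y α * pdy g α x y = d * g x y :=
  (sum_mul_pdy y).trans <| hg.fderiv_self hx (differentiableAt_slice hd)

protected theorem pdy (hg : IsPosHomogeneousOn U (d + 1) g) (α : ι) :
    IsPosHomogeneousOn U d (pdy g α) := fun x hx y c hc => by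
  have hscale : c • fderiv ℝ (g x) (c • y) = c ^ (d + 1) • fderiv ℝ (g x) y := by
    rw [← fderiv_comp_smul, funext fun y => hg x hx y c hc]
    exact congrFun (fderiv_const_smul_field (f := g x) (c ^ (d + 1))) y
  refine mul_left_cancel₀ hc.ne' ?_
  calc c * pdy g α x (c • y) = c ^ (d + 1) * pdy g α x y :=
        congrArg (fun L => L (Pi.single α 1)) hscale
    _ = c * (c ^ d * pdy g α x y) := by ring

protected theorem pdx (hg : IsPosHomogeneousOn U d g) (hU : IsOpen U) (γ : ι) :
    IsPosHomogeneousOn U d (pdx g γ) := fun x hx y c hc => by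
  have hscale : (fun x' => g x' (c • y)) =ᶠ[𝓝 x] c ^ d • fun x' => g x' y := by
    filter_upwards [hU.mem_nhds hx] with x' hx' using hg x' hx' y c hc
  simp only [pdx, hscale.fderiv_eq]
  rw [congrFun (fderiv_const_smul_field (c ^ d)) x]
  rfl

end IsPosHomogeneousOn

end Homogeneity

/-! ### Euler–Lagrange equations -/

section ChainRule

variable {E : Type*} [NormedAddCommGroup E] [NormedSpace ℝ E] {f : ℝ → ℝ → ℝ} {s t : ℝ}
  {m n : WithTop ℕ∞}

theorem contDiffAt_pderivS (hf : ContDiffAt ℝ n (uncurry f) (s, t)) (hmn : m + 1 ≤ n) :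
    ContDiffAt ℝ m (uncurry (pderivS f)) (s, t) := by
  have hslice : ContDiffAt ℝ n (uncurry fun (p : ℝ × ℝ) u => f u p.2) ((s, t), s) :=
    ContDiffAt.comp ((s, t), s) (f := fun q : (ℝ × ℝ) × ℝ => (q.2, q.1.2)) hf (by fun_prop)
  exact (hslice.fderiv contDiffAt_fst hmn).clm_apply contDiffAt_const

theorem contDiffAt_pderivT (hf : ContDiffAt ℝ n (uncurry f) (s, t)) (hmn : m + 1 ≤ n) :
    ContDiffAt ℝ m (uncurry (pderivT f)) (s, t) :=
  contDiffAt_uncurry_flip (contDiffAt_pderivS (contDiffAt_uncurry_flip hf) hmn)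

theorem fderiv_comp₂ {a b : E → ℝ} {z : E} (hf : DifferentiableAt ℝ (uncurry f) (a z, b z))
    (ha : DifferentiableAt ℝ a z) (hb : DifferentiableAt ℝ b z) :
    fderiv ℝ (fun z => f (a z) (b z)) z
      = pderivS f (a z) (b z) • fderiv ℝ a z + pderivT f (a z) (b z) • fderiv ℝ b z := by
  have hS : pderivS f (a z) (b z) = fderiv ℝ (uncurry f) (a z, b z) (1, 0) :=
    (hf.hasFDerivAt.comp_hasDerivAt (f := fun u => (u, b z)) (a z)
      ((hasDerivAt_id _).prodMk (hasDerivAt_const _ _))).deriv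
  have hT : pderivT f (a z) (b z) = fderiv ℝ (uncurry f) (a z, b z) (0, 1) :=
    (hf.hasFDerivAt.comp_hasDerivAt (f := fun v => (a z, v)) (b z)
      ((hasDerivAt_const _ _).prodMk (hasDerivAt_id _))).deriv
  have hcomp : HasFDerivAt (fun z => f (a z) (b z)) _ z :=
    HasFDerivAt.comp (f := fun z => (a z, b z)) z hf.hasFDerivAt
      (ha.hasFDerivAt.prodMk hb.hasFDerivAt)
  ext v
  have hsplit : (fderiv ℝ a z v, fderiv ℝ b z v)
      = fderiv ℝ a z v • ((1, 0) : ℝ × ℝ) + fderiv ℝ b z v • ((0, 1) : ℝ × ℝ) := by simp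
  rw [hcomp.fderiv, hS, hT]
  simp only [ContinuousLinearMap.comp_apply, ContinuousLinearMap.prod_apply, hsplit, map_add,
    map_smul, _root_.add_apply, _root_.smul_apply, smul_eq_mul]
  ring

end ChainRule

section EulerLagrange

variable {ι : Type*} {g h A B : (ι → ℝ) → (ι → ℝ) → ℝ} {f : ℝ → ℝ → ℝ}
  {x y a : ι → ℝ}

/-- The derivative at `(x, y)` of `g` along the second-order vector field
`y^γ ∂/∂x^γ + a^α ∂/∂y^α`, that is, along the lift `t ↦ (c t, c' t)` of a curve with position `x`,
velocity `y` and acceleration `a`. -/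
noncomputable def semisprayDeriv (g : (ι → ℝ) → (ι → ℝ) → ℝ) (x y a : ι → ℝ) : ℝ :=
  fderiv ℝ (uncurry g) (x, y) (y, a)

theorem semisprayDeriv_congr (hgh : uncurry g =ᶠ[𝓝 (x, y)] uncurry h) :
    semisprayDeriv g x y a = semisprayDeriv h x y a :=
  congrArg (fun L => L (y, a)) (hgh.fderiv_eq (𝕜 := ℝ))

theorem semisprayDeriv_velocity (β : ι) : semisprayDeriv (fun _ y => y β) x y a = a β :=
  congrArg (fun L => L (y, a)) ((ContinuousLinearMap.proj (R := ℝ) (φ := fun _ => ℝ) β).comp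
    (.snd ℝ (ι → ℝ) (ι → ℝ))).fderiv

section Finite

variable [Finite ι]

theorem differentiableAt_comp₂ (hf : DifferentiableAt ℝ (uncurry f) (A x y, B x y))
    (hA : DifferentiableAt ℝ (uncurry A) (x, y)) (hB : DifferentiableAt ℝ (uncurry B) (x, y)) :
    DifferentiableAt ℝ (uncurry fun x y => f (A x y) (B x y)) (x, y) :=
  have := Fintype.ofFinite ι
  DifferentiableAt.comp (f := fun p => (uncurry A p, uncurry B p)) (x, y) hf (hA.prodMk hB)

theorem semisprayDeriv_comp₂ (hf : DifferentiableAt ℝ (uncurry f) (A x y, B x y))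
    (hA : DifferentiableAt ℝ (uncurry A) (x, y)) (hB : DifferentiableAt ℝ (uncurry B) (x, y)) :
    semisprayDeriv (fun x y => f (A x y) (B x y)) x y a
      = pderivS f (A x y) (B x y) * semisprayDeriv A x y a
        + pderivT f (A x y) (B x y) * semisprayDeriv B x y a :=
  have := Fintype.ofFinite ι
  congrArg (fun L => L (y, a))
    (fderiv_comp₂ (a := uncurry A) (b := uncurry B) hf hA hB)

theorem semisprayDeriv_add (hg : DifferentiableAt ℝ (uncurry g) (x, y))
    (hh : DifferentiableAt ℝ (uncurry h) (x, y)) :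
    semisprayDeriv (fun x y => g x y + h x y) x y a
      = semisprayDeriv g x y a + semisprayDeriv h x y a :=
  have := Fintype.ofFinite ι
  congrArg (fun L => L (y, a)) (fderiv_fun_add hg hh)

theorem semisprayDeriv_mul (hg : DifferentiableAt ℝ (uncurry g) (x, y))
    (hh : DifferentiableAt ℝ (uncurry h) (x, y)) :
    semisprayDeriv (fun x y => g x y * h x y) x y a
      = g x y * semisprayDeriv h x y a + h x y * semisprayDeriv g x y a :=
  have := Fintype.ofFinite ι
  congrArg (fun L => L (y, a)) (fderiv_fun_mul hg hh)

theorem semisprayDeriv_sum {κ : Type*} {u : Finset κ} {g : κ → (ι → ℝ) → (ι → ℝ) → ℝ}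
    (hg : ∀ k ∈ u, DifferentiableAt ℝ (uncurry (g k)) (x, y)) :
    semisprayDeriv (fun x y => ∑ k ∈ u, g k x y) x y a = ∑ k ∈ u, semisprayDeriv (g k) x y a :=
  have := Fintype.ofFinite ι
  (congrArg (fun L => L (y, a)) (fderiv_fun_sum hg)).trans (_root_.sum_apply _ _ _)

end Finite

variable [Fintype ι] [DecidableEq ι]

theorem semisprayDeriv_eq_sum (hg : DifferentiableAt ℝ (uncurry g) (x, y)) :
    semisprayDeriv g x y a = ∑ γ, y γ * pdx g γ x y + ∑ α, a α * pdy g α x y := by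
  have hfst : HasFDerivAt (fun x' => g x' y) _ x :=
    HasFDerivAt.comp (f := fun x' => (x', y)) x hg.hasFDerivAt (hasFDerivAt_prodMk_left x y)
  have hsnd : HasFDerivAt (g x) _ y := hg.hasFDerivAt.comp y (hasFDerivAt_prodMk_right x y)
  rw [sum_mul_pdx, sum_mul_pdy, hfst.fderiv, hsnd.fderiv]
  simp [semisprayDeriv, ← map_add]

theorem pdy_comp₂ (hf : DifferentiableAt ℝ (uncurry f) (A x y, B x y))
    (hA : DifferentiableAt ℝ (uncurry A) (x, y)) (hB : DifferentiableAt ℝ (uncurry B) (x, y))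
    (α : ι) :
    pdy (fun x y => f (A x y) (B x y)) α x y
      = pderivS f (A x y) (B x y) * pdy A α x y + pderivT f (A x y) (B x y) * pdy B α x y :=
  congrArg (fun L => L (Pi.single α 1))
    (fderiv_comp₂ hf (differentiableAt_slice hA) (differentiableAt_slice hB))

theorem pdx_comp₂ (hf : DifferentiableAt ℝ (uncurry f) (A x y, B x y))
    (hA : DifferentiableAt ℝ (uncurry A) (x, y)) (hB : DifferentiableAt ℝ (uncurry B) (x, y))
    (γ : ι) :
    pdx (fun x y => f (A x y) (B x y)) γ x y
      = pderivS f (A x y) (B x y) * pdx A γ x y + pderivT f (A x y) (B x y) * pdx B γ x y :=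
  congrArg (fun L => L (Pi.single γ 1)) <|
    fderiv_comp₂ (a := fun x' => A x' y) (b := fun x' => B x' y) hf
    (DifferentiableAt.comp (f := fun x' => (x', y)) x hA (by fun_prop))
    (DifferentiableAt.comp (f := fun x' => (x', y)) x hB (by fun_prop))

theorem eventuallyEq_pdy_comp₂ (hf : ContDiffAt ℝ 1 (uncurry f) (A x y, B x y))
    (hA : ContDiffAt ℝ 1 (uncurry A) (x, y)) (hB : ContDiffAt ℝ 1 (uncurry B) (x, y)) (α : ι) :
    uncurry (pdy (fun x y => f (A x y) (B x y)) α) =ᶠ[𝓝 (x, y)] uncurry fun x y =>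
      pderivS f (A x y) (B x y) * pdy A α x y + pderivT f (A x y) (B x y) * pdy B α x y := by
  have hf' : ∀ᶠ p in 𝓝 (x, y), ContDiffAt ℝ 1 (uncurry f) (uncurry A p, uncurry B p) :=
    (hA.continuousAt.prodMk hB.continuousAt).eventually (hf.eventually (by simp))
  filter_upwards [hf', hA.eventually (by simp), hB.eventually (by simp)] with ⟨x', y'⟩ hfp hAp hBp
  exact pdy_comp₂ (hfp.differentiableAt (by simp)) (hAp.differentiableAt (by simp))
    (hBp.differentiableAt (by simp)) α

/-- The Euler–Lagrange equations of the Lagrangian `L`, for a curve with position `x`, velocity `y`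
and acceleration `a`. -/
def IsEulerLagrange (L : (ι → ℝ) → (ι → ℝ) → ℝ) (x y a : ι → ℝ) : Prop :=
  ∀ β, semisprayDeriv (pdy L β) x y a = pdx L β x y

namespace IsEulerLagrange

protected theorem congr (hA : IsEulerLagrange A x y a)
    (hAB : uncurry A =ᶠ[𝓝 (x, y)] uncurry B) : IsEulerLagrange B x y a := fun β => by
  have hx : pdx A β x y = pdx B β x y := (eventuallyEq_pdx hAB β).eq_of_nhds
  rw [← hx, ← hA β, semisprayDeriv, semisprayDeriv, (eventuallyEq_pdy hAB β).fderiv_eq]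

/-- Conservation of energy: differentiating Euler's identity `y^β ∂L/∂y^β = d L` along the motion
gives `D L = d D L`. -/
theorem semisprayDeriv_eq_zero {U : Set (ι → ℝ)} {d : ℕ} (hA : IsEulerLagrange A x y a)
    (hd : d ≠ 1) (hhom : IsPosHomogeneousOn U d A) (hU : U ∈ 𝓝 x)
    (hsm : ContDiffAt ℝ 2 (uncurry A) (x, y)) : semisprayDeriv A x y a = 0 := by
  have hdiff := hsm.differentiableAt two_ne_zero
  have hpdy : ∀ β, DifferentiableAt ℝ (uncurry (pdy A β)) (x, y) := fun β =>
    (contDiffAt_pdy (m := 1) hsm (by norm_num) β).differentiableAt one_ne_zero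
  have hvel : ∀ β, DifferentiableAt ℝ (uncurry fun _ y : ι → ℝ => y β) (x, y) := fun β => by
    unfold uncurry; fun_prop
  have heuler : uncurry (fun x y => ∑ β, y β * pdy A β x y)
      =ᶠ[𝓝 (x, y)] uncurry fun x y => d * A x y := by
    filter_upwards [hsm.eventually (by simp), continuousAt_fst.preimage_mem_nhds hU]
      with ⟨x', y'⟩ hp hx'
    exact hhom.sum_mul_pdy_self hx' (hp.differentiableAt two_ne_zero)
  have hderiv : semisprayDeriv A x y a = d * semisprayDeriv A x y a := by
    calc semisprayDeriv A x y a
        = ∑ β, (y β * semisprayDeriv (pdy A β) x y a + pdy A β x y * a β) := by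
          simp only [semisprayDeriv_eq_sum hdiff, hA _, mul_comm (a _), Finset.sum_add_distrib]
      _ = semisprayDeriv (fun x y => ∑ β, y β * pdy A β x y) x y a := by
          rw [semisprayDeriv_sum fun β _ => (hvel β).mul (hpdy β)]
          simp only [semisprayDeriv_mul (hvel _) (hpdy _), semisprayDeriv_velocity]
      _ = semisprayDeriv (fun x y => d * A x y) x y a := semisprayDeriv_congr heuler
      _ = d * semisprayDeriv A x y a := congrArg (fun L => L (y, a)) (fderiv_const_mul hdiff _)
  have hd' : (1 - d : ℝ) ≠ 0 := sub_ne_zero.2 (by exact_mod_cast hd.symm)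
  exact (mul_eq_zero.1 (by linear_combination hderiv)).resolve_left hd'

theorem comp₂ (hf : ContDiffAt ℝ 2 (uncurry f) (A x y, B x y))
    (hA : IsEulerLagrange A x y a) (hA2 : ContDiffAt ℝ 2 (uncurry A) (x, y))
    (hA0 : semisprayDeriv A x y a = 0)
    (hB : IsEulerLagrange B x y a) (hB2 : ContDiffAt ℝ 2 (uncurry B) (x, y))
    (hB0 : semisprayDeriv B x y a = 0) :
    IsEulerLagrange (fun x y => f (A x y) (B x y)) x y a := fun β => by
  have hfS : DifferentiableAt ℝ (uncurry (pderivS f)) (A x y, B x y) :=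
    (contDiffAt_pderivS (m := 1) hf (by norm_num)).differentiableAt one_ne_zero
  have hfT : DifferentiableAt ℝ (uncurry (pderivT f)) (A x y, B x y) :=
    (contDiffAt_pderivT (m := 1) hf (by norm_num)).differentiableAt one_ne_zero
  have hAd := hA2.differentiableAt two_ne_zero
  have hBd := hB2.differentiableAt two_ne_zero
  have hAβ : DifferentiableAt ℝ (uncurry (pdy A β)) (x, y) :=
    (contDiffAt_pdy (m := 1) hA2 (by norm_num) β).differentiableAt one_ne_zero
  have hBβ : DifferentiableAt ℝ (uncurry (pdy B β)) (x, y) :=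
    (contDiffAt_pdy (m := 1) hB2 (by norm_num) β).differentiableAt one_ne_zero
  have hSd := differentiableAt_comp₂ hfS hAd hBd
  have hTd := differentiableAt_comp₂ hfT hAd hBd
  calc semisprayDeriv (pdy (fun x y => f (A x y) (B x y)) β) x y a
      = semisprayDeriv (fun x y => pderivS f (A x y) (B x y) * pdy A β x y
          + pderivT f (A x y) (B x y) * pdy B β x y) x y a :=
        semisprayDeriv_congr (eventuallyEq_pdy_comp₂ (hf.of_le one_le_two)
          (hA2.of_le one_le_two) (hB2.of_le one_le_two) β)
    _ = pderivS f (A x y) (B x y) * pdx A β x y + pderivT f (A x y) (B x y) * pdx B β x y := by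
        rw [semisprayDeriv_add (hSd.mul hAβ) (hTd.mul hBβ),
          semisprayDeriv_mul hSd hAβ, semisprayDeriv_mul hTd hBβ,
          semisprayDeriv_comp₂ hfS hAd hBd, semisprayDeriv_comp₂ hfT hAd hBd, hA0, hB0, hA β, hB β]
        ring
    _ = pdx (fun x y => f (A x y) (B x y)) β x y :=
        (pdx_comp₂ (hf.differentiableAt two_ne_zero) hAd hBd β).symm

end IsEulerLagrange

end EulerLagrange

/-! ### Finsler metrics -/

section MatrixSmoothness

variable {ι E : Type*} [Fintype ι] [DecidableEq ι] [NormedAddCommGroup E] [NormedSpace ℝ E]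
  {M : E → Matrix ι ι ℝ} {z : E} {n : WithTop ℕ∞}

theorem contDiffAt_matrix_det (hM : ∀ α β, ContDiffAt ℝ n (fun z => M z α β) z) :
    ContDiffAt ℝ n (fun z => (M z).det) z := by
  simp only [Matrix.det_apply]
  exact ContDiffAt.sum fun σ _ => (contDiffAt_prod fun i _ => hM (σ i) i).const_smul _

theorem contDiffAt_matrix_inv (hM : ∀ α β, ContDiffAt ℝ n (fun z => M z α β) z)
    (hdet : (M z).det ≠ 0) (α β : ι) : ContDiffAt ℝ n (fun z => (M z)⁻¹ α β) z := by
  have hadj : ContDiffAt ℝ n (fun z => ((M z).updateRow β (Pi.single α 1)).det) z := by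
    refine contDiffAt_matrix_det fun a b => ?_
    rcases eq_or_ne a β with rfl | ha
    · simpa only [Matrix.updateRow_self] using contDiffAt_const
    · simpa only [Matrix.updateRow_ne ha] using hM a b
  simp only [Matrix.inv_def, Matrix.smul_apply, Matrix.adjugate_apply, Ring.inverse_eq_inv',
    smul_eq_mul]
  exact ((contDiffAt_matrix_det hM).inv hdet).mul hadj

end MatrixSmoothness

section Finsler

variable {ι : Type*}

/-- The energy `G = F²` of a Finsler metric, whose geodesics are the solutions of its
Euler–Lagrange equations. -/
noncomputable def energy (F : (ι → ℝ) → (ι → ℝ) → ℝ) : (ι → ℝ) → (ι → ℝ) → ℝ :=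
  fun x y => F x y ^ 2

variable [Fintype ι] [DecidableEq ι]

/-- The Landsberg curvature `L_{αβγ}` with its first index fixed, as a matrix in `β` and `γ`. -/
noncomputable def landsbergMatrix (F : (ι → ℝ) → (ι → ℝ) → ℝ) (α : ι) (x y : ι → ℝ) :
    Matrix ι ι ℝ :=
  fun β γ => landsbergCurv F α β γ x y

namespace IsFinslerMetric

variable {U : Set (ι → ℝ)} {F : (ι → ℝ) → (ι → ℝ) → ℝ} {x y : ι → ℝ}

section Regularity

theorem contDiffAt_energy (hF : IsFinslerMetric U F) (hx : x ∈ U) (hy : y ≠ 0) :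
    ContDiffAt ℝ ∞ (uncurry (energy F)) (x, y) :=
  hF.smooth.contDiffAt ((hF.isOpen.prod isOpen_ne).mem_nhds ⟨hx, hy⟩)

theorem contDiffAt_pdy_energy (hF : IsFinslerMetric U F) (hx : x ∈ U) (hy : y ≠ 0) (α : ι) :
    ContDiffAt ℝ ∞ (uncurry (pdy (energy F) α)) (x, y) :=
  contDiffAt_pdy (hF.contDiffAt_energy hx hy) (by simp) α

theorem contDiffAt_fundTensor (hF : IsFinslerMetric U F) (hx : x ∈ U) (hy : y ≠ 0) (α β : ι) :
    ContDiffAt ℝ ∞ (uncurry fun x y => fundTensor F x y α β) (x, y) :=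
  contDiffAt_pdy (hF.contDiffAt_pdy_energy hx hy β) (by simp) α

theorem isUnit_det_fundTensor (hF : IsFinslerMetric U F) (hx : x ∈ U) (hy : y ≠ 0) :
    IsUnit (fundTensor F x y).det :=
  (hF.posDef x hx y hy).det_pos.ne'.isUnit

theorem transpose_fundTensor (hF : IsFinslerMetric U F) (hx : x ∈ U) (hy : y ≠ 0) :
    (fundTensor F x y)ᵀ = fundTensor F x y := by
  simpa using (hF.posDef x hx y hy).isHermitian.eq

theorem contDiffAt_inv_fundTensor (hF : IsFinslerMetric U F) (hx : x ∈ U) (hy : y ≠ 0)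
    (α β : ι) : ContDiffAt ℝ ∞ (uncurry fun x y => (fundTensor F x y)⁻¹ α β) (x, y) :=
  contDiffAt_matrix_inv (M := fun p : (ι → ℝ) × (ι → ℝ) => fundTensor F p.1 p.2)
    (fun α β => hF.contDiffAt_fundTensor hx hy α β) (hF.isUnit_det_fundTensor hx hy).ne_zero α β

theorem contDiffAt_spray (hF : IsFinslerMetric U F) (hx : x ∈ U) (hy : y ≠ 0) (α : ι) :
    ContDiffAt ℝ ∞ (uncurry (spray F α)) (x, y) := by
  have hpdx : ∀ β γ, ContDiffAt ℝ ∞ (uncurry (pdx (pdy (energy F) β) γ)) (x, y) := fun β γ =>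
    contDiffAt_pdx (hF.contDiffAt_pdy_energy hx hy β) (by simp) γ
  have hpdx' : ∀ β, ContDiffAt ℝ ∞ (uncurry (pdx (energy F) β)) (x, y) :=
    contDiffAt_pdx (hF.contDiffAt_energy hx hy) (by simp)
  have hvel : ∀ γ, ContDiffAt ℝ ∞ (fun p : (ι → ℝ) × (ι → ℝ) => p.2 γ) (x, y) := fun γ => by
    fun_prop
  exact contDiffAt_const.mul <| ContDiffAt.sum fun β _ =>
    (hF.contDiffAt_inv_fundTensor hx hy α β).mul <|
      (ContDiffAt.sum fun γ _ => (hpdx β γ).mul (hvel γ)).sub (hpdx' β)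

end Regularity

theorem isPosHomogeneousOn_energy (hF : IsFinslerMetric U F) :
    IsPosHomogeneousOn U 2 (energy F) := fun x hx y c hc => by
  simp only [energy, hF.homog x hx y c, abs_of_pos hc, mul_pow]

theorem isPosHomogeneousOn_spray (hF : IsFinslerMetric U F) (α : ι) :
    IsPosHomogeneousOn U 2 (spray F α) := fun x hx y c hc => by
  have hfund : fundTensor F x (c • y) = fundTensor F x y := by
    ext β γ
    exact ((hF.isPosHomogeneousOn_energy.pdy γ).pdy β x hx y c hc).trans (by simp; rfl)
  have hmixed : ∀ β γ, pdx (pdy (energy F) β) γ x (c • y) = c * pdx (pdy (energy F) β) γ x y :=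
    fun β γ => by
      simpa using (hF.isPosHomogeneousOn_energy.pdy β).pdx hF.isOpen γ x hx y c hc
  have hbase : ∀ β, pdx (energy F) β x (c • y) = c ^ 2 * pdx (energy F) β x y := fun β =>
    hF.isPosHomogeneousOn_energy.pdx hF.isOpen β x hx y c hc
  change 1 / 2 * ∑ β, (fundTensor F x (c • y))⁻¹ α β *
    ((∑ γ, pdx (pdy (energy F) β) γ x (c • y) * (c • y) γ) - pdx (energy F) β x (c • y)) =
    c ^ 2 * (1 / 2 * ∑ β, (fundTensor F x y)⁻¹ α β *
      ((∑ γ, pdx (pdy (energy F) β) γ x y * y γ) - pdx (energy F) β x y))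
  simp only [hfund, hmixed, hbase, Pi.smul_apply, smul_eq_mul, Finset.mul_sum, mul_sub]
  refine Finset.sum_congr rfl fun β _ => ?_
  congr 1
  · exact Finset.sum_congr rfl fun γ _ => by ring
  · ring

theorem vecMul_fundTensor (hF : IsFinslerMetric U F) (hx : x ∈ U) (hy : y ≠ 0) :
    y ᵥ* fundTensor F x y = fun β => pdy (energy F) β x y := funext fun β =>
  (hF.isPosHomogeneousOn_energy.pdy β).sum_mul_pdy_self hx
    ((hF.contDiffAt_pdy_energy hx hy β).differentiableAt (by simp)) |>.trans (by simp)

theorem isEulerLagrange_energy_iff (hF : IsFinslerMetric U F) (hx : x ∈ U) (hy : y ≠ 0)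
    {a : ι → ℝ} :
    IsEulerLagrange (energy F) x y a ↔ a = fun α => -2 * spray F α x y := by
  set r : ι → ℝ := fun β => (∑ γ, pdx (pdy (energy F) β) γ x y * y γ) - pdx (energy F) β x y
  have hspray : (fun α => -2 * spray F α x y) = -((fundTensor F x y)⁻¹ *ᵥ r) := funext fun α =>
    show -2 * (1 / 2 * ∑ β, (fundTensor F x y)⁻¹ α β * r β)
      = -∑ β, (fundTensor F x y)⁻¹ α β * r β by ring
  have hEL : IsEulerLagrange (energy F) x y a ↔ fundTensor F x y *ᵥ a = -r := by
    rw [← Matrix.vecMul_transpose, hF.transpose_fundTensor hx hy, IsEulerLagrange, funext_iff]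
    refine forall_congr' fun β => ?_
    have hsum : semisprayDeriv (pdy (energy F) β) x y a
        = r β + pdx (energy F) β x y + (a ᵥ* fundTensor F x y) β := by
      rw [semisprayDeriv_eq_sum ((hF.contDiffAt_pdy_energy hx hy β).differentiableAt (by simp))]
      simp only [r, mul_comm, sub_add_cancel]
      rfl
    rw [hsum, Pi.neg_apply]
    constructor <;> intro h <;> linarith
  have hdet := hF.isUnit_det_fundTensor hx hy
  rw [hspray, hEL, ← Matrix.mulVec_neg]
  refine ⟨fun h => ?_, fun h => ?_⟩
  · rw [← h, Matrix.mulVec_mulVec, Matrix.nonsing_inv_mul _ hdet, Matrix.one_mulVec]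
  · rw [h, Matrix.mulVec_mulVec, Matrix.mul_nonsing_inv _ hdet, Matrix.one_mulVec]

theorem landsbergCurv_eq (hF : IsFinslerMetric U F) (hx : x ∈ U) (hy : y ≠ 0) (β γ η : ι) :
    landsbergCurv F β γ η x y
      = -(1 / 4) * ∑ α, pdy (energy F) α x y * berwaldCurv F α β γ η x y := by
  rw [landsbergCurv, Finset.sum_comm]
  simp only [← Finset.sum_mul, ← congrFun (hF.vecMul_fundTensor hx hy)]
  rfl

theorem sum_mul_berwaldCurv (hF : IsFinslerMetric U F) (hx : x ∈ U) (hy : y ≠ 0) (α β η : ι) :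
    ∑ γ, y γ * berwaldCurv F α β γ η x y = 0 := by
  have hsm : ContDiffAt ℝ ∞ (uncurry (pdy (spray F α) η)) (x, y) :=
    contDiffAt_pdy (hF.contDiffAt_spray hx hy α) (by simp) η
  have hdiff : DifferentiableAt ℝ (uncurry (pdy (pdy (spray F α) η) β)) (x, y) :=
    (contDiffAt_pdy (m := ∞) hsm (by simp) β).differentiableAt (by simp)
  calc ∑ γ, y γ * berwaldCurv F α β γ η x y
      = ∑ γ, y γ * pdy (pdy (pdy (spray F α) η) β) γ x y :=
        Finset.sum_congr rfl fun γ _ =>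
          congrArg (y γ * ·) (pdy_comm (hsm.of_le ENat.LEInfty.out) γ β)
    _ = 0 := by
        simpa using ((hF.isPosHomogeneousOn_spray α).pdy η |>.pdy β).sum_mul_pdy_self hx hdiff

theorem vecMul_landsbergMatrix (hF : IsFinslerMetric U F) (hx : x ∈ U) (hy : y ≠ 0) (α : ι) :
    y ᵥ* landsbergMatrix F α x y = 0 := funext fun γ => by
  calc ∑ β, y β * landsbergCurv F α β γ x y
      = -(1 / 4) * ∑ δ, pdy (energy F) δ x y * ∑ β, y β * berwaldCurv F δ α β γ x y := by
        simp_rw [hF.landsbergCurv_eq hx hy α, Finset.mul_sum]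
        rw [Finset.sum_comm]
        exact Finset.sum_congr rfl fun δ _ => Finset.sum_congr rfl fun β _ => by ring
    _ = 0 := by simp [hF.sum_mul_berwaldCurv hx hy]

theorem meanLandsbergCurv_eq_trace (hF : IsFinslerMetric U F) (hx : x ∈ U) (hy : y ≠ 0) (α : ι) :
    meanLandsbergCurv F α x y = 2 * ((fundTensor F x y)⁻¹ * landsbergMatrix F α x y).trace := by
  have hsymm : ((fundTensor F x y)⁻¹)ᵀ = (fundTensor F x y)⁻¹ := by
    rw [Matrix.transpose_nonsing_inv, hF.transpose_fundTensor hx hy]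
  rw [Matrix.trace_mul_comm, ← hsymm, ← Matrix.sum_hadamard_eq]
  simp only [meanLandsbergCurv, Matrix.hadamard_apply, landsbergMatrix, mul_comm]

end IsFinslerMetric

end Finsler

/-! ### Functions of a block of coordinates -/

section BlockPullback

theorem fderiv_comp_of_hasRightInverse {E E' G : Type*} [NormedAddCommGroup E] [NormedSpace ℝ E]
    [NormedAddCommGroup E'] [NormedSpace ℝ E'] [NormedAddCommGroup G] [NormedSpace ℝ G]
    {L : E →L[ℝ] E'} (hL : L.HasRightInverse) (g : E' → G) (z : E) :
    fderiv ℝ (g ∘ L) z = (fderiv ℝ g (L z)).comp L := by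
  by_cases hg : DifferentiableAt ℝ g (L z)
  · rw [fderiv_comp z hg L.differentiableAt, L.fderiv]
  · obtain ⟨R, hR⟩ := hL
    -- `g` is recovered from `g ∘ L` by composing with the affine section of `L` through `z`.
    have hsection : g = (g ∘ L) ∘ fun u => z + R (u - L z) := by
      ext u
      simp only [Function.comp_apply, map_add, hR (u - L z), add_sub_cancel]
    have hgL : ¬ DifferentiableAt ℝ (g ∘ L) z := fun h => hg <| by
      rw [hsection]
      exact DifferentiableAt.comp (L z) (by simpa using h) (by fun_prop)
    rw [fderiv_zero_of_not_differentiableAt hg, fderiv_zero_of_not_differentiableAt hgL,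
      ContinuousLinearMap.zero_comp]

variable {ι κ : Type*} {e : ι → κ} {g : (ι → ℝ) → (ι → ℝ) → ℝ}

/-- The function of `(x, y)` obtained by applying `g` to the block of coordinates selected by
`e`. -/
def blockPullback (e : ι → κ) (g : (ι → ℝ) → (ι → ℝ) → ℝ) : (κ → ℝ) → (κ → ℝ) → ℝ :=
  fun x y => g (x ∘ e) (y ∘ e)

theorem hasRightInverse_compRightL [Finite ι] (he : Injective e) :
    (Pi.compRightL ℝ (fun _ : κ => ℝ) e).HasRightInverse :=
  have := Fintype.ofFinite ι
  .of_surjective_of_finiteDimensional he.surjective_comp_right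

theorem contDiffAt_blockPullback [Fintype ι] [Fintype κ] {n : WithTop ℕ∞} {x y : κ → ℝ}
    (hg : ContDiffAt ℝ n (uncurry g) (x ∘ e, y ∘ e)) :
    ContDiffAt ℝ n (uncurry (blockPullback e g)) (x, y) :=
  let R : (κ → ℝ) →L[ℝ] ι → ℝ := Pi.compRightL ℝ (fun _ : κ => ℝ) e
  ContDiffAt.comp (x, y) (f := R.prodMap R) hg (R.prodMap R).contDiff.contDiffAt

theorem semisprayDeriv_blockPullback [Finite ι] [Finite κ] (he : Injective e) (x y a : κ → ℝ) :
    semisprayDeriv (blockPullback e g) x y a = semisprayDeriv g (x ∘ e) (y ∘ e) (a ∘ e) :=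
  have := Fintype.ofFinite ι
  have := Fintype.ofFinite κ
  congrArg (fun L => L (y, a)) <| fderiv_comp_of_hasRightInverse
    ((hasRightInverse_compRightL he).prodMap (hasRightInverse_compRightL he)) (uncurry g) (x, y)

variable [Fintype κ] [DecidableEq κ]

theorem pdy_zero (α : κ) : pdy 0 α = 0 := by
  ext x y
  simp [pdy]

section Finite

variable [Finite ι]

theorem pdy_blockPullback_apply (he : Injective e) (α : κ) (x y : κ → ℝ) :
    pdy (blockPullback e g) α x y = fderiv ℝ (g (x ∘ e)) (y ∘ e) (Pi.single α 1 ∘ e) :=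
  have := Fintype.ofFinite ι
  congrArg (fun L => L (Pi.single α 1))
    (fderiv_comp_of_hasRightInverse (hasRightInverse_compRightL he) (g (x ∘ e)) y)

theorem pdy_blockPullback_of_notMem_range (he : Injective e) {α : κ} (hα : α ∉ Set.range e) :
    pdy (blockPullback e g) α = 0 := by
  ext x y
  have hsingle : (Pi.single α 1 : κ → ℝ) ∘ e = 0 :=
    update_comp_eq_of_notMem_range (0 : κ → ℝ) 1 hα
  rw [pdy_blockPullback_apply he, hsingle, map_zero]
  rfl

theorem pdx_blockPullback_of_notMem_range (he : Injective e) {α : κ} (hα : α ∉ Set.range e) :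
    pdx (blockPullback e g) α = 0 :=
  congrArg flip (pdy_blockPullback_of_notMem_range (g := flip g) he hα)

end Finite

variable [Fintype ι] [DecidableEq ι]

theorem pdy_blockPullback (he : Injective e) (i : ι) :
    pdy (blockPullback e g) (e i) = blockPullback e (pdy g i) := by
  ext x y
  have hsingle : (Pi.single (e i) 1 : κ → ℝ) ∘ e = Pi.single i 1 :=
    update_comp_eq_of_injective (0 : κ → ℝ) he i 1
  rw [pdy_blockPullback_apply he, hsingle]
  rfl

theorem pdx_blockPullback (he : Injective e) (i : ι) :
    pdx (blockPullback e g) (e i) = blockPullback e (pdx g i) :=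
  congrArg flip (pdy_blockPullback (g := flip g) he i)

protected theorem IsEulerLagrange.blockPullback (he : Injective e) {x y a : κ → ℝ}
    (hg : IsEulerLagrange g (x ∘ e) (y ∘ e) (a ∘ e)) :
    IsEulerLagrange (blockPullback e g) x y a := fun β => by
  by_cases hβ : β ∈ Set.range e
  · obtain ⟨b, rfl⟩ := hβ
    rw [pdy_blockPullback he, pdx_blockPullback he, semisprayDeriv_blockPullback he, hg b]
    rfl
  · rw [pdy_blockPullback_of_notMem_range he hβ, pdx_blockPullback_of_notMem_range he hβ]
    exact congrArg (fun L => L (y, a)) (fderiv_const_apply (𝕜 := ℝ) (x := (x, y)) (0 : ℝ))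

end BlockPullback

/-! ### Block inclusions -/

section BlockInclusion

variable {ι κ R : Type*} [DecidableEq κ] [CommRing R]

/-- The matrix of the inclusion of the block of coordinates selected by `e`: its `i`-th column is
the `e i`-th basis vector. -/
def blockInclusion (R : Type*) [CommRing R] (e : ι → κ) : Matrix κ ι R :=
  (1 : Matrix κ κ R).submatrix id e

variable {e : ι → κ}

theorem mul_blockInclusion {κ' : Type*} [Fintype κ] (M : Matrix κ' κ R) :
    M * blockInclusion R e = M.submatrix id e := by
  ext a i
  simp [blockInclusion, Matrix.mul_apply, Matrix.one_apply]

theorem transpose_blockInclusion_mul_self [Fintype κ] [DecidableEq ι] (he : Injective e) :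
    (blockInclusion R e)ᵀ * blockInclusion R e = 1 := by
  rw [mul_blockInclusion]
  ext i j
  simp [blockInclusion, Matrix.one_apply, he.eq_iff]

variable [Fintype ι]

theorem blockInclusion_mul_apply_of_notMem_range {κ' : Type*} (N : Matrix ι κ' R) {α : κ}
    (hα : α ∉ Set.range e) (i : κ') : (blockInclusion R e * N) α i = 0 :=
  Finset.sum_eq_zero fun j _ => by
    have hj : α ≠ e j := fun h => hα ⟨j, h.symm⟩
    simp [blockInclusion, hj]

theorem blockInclusion_mul_apply {κ' : Type*} (he : Injective e) (N : Matrix ι κ' R) (a : ι)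
    (i : κ') :
    (blockInclusion R e * N) (e a) i = N a i := by
  classical
  simp [blockInclusion, Matrix.mul_apply, Matrix.one_apply, he.eq_iff]

theorem eq_blockInclusion_mul_mul_transpose (he : Injective e) {X : Matrix κ κ R} {T : Matrix ι ι R}
    (hX : ∀ b c, X (e b) (e c) = T b c) (hrow : ∀ β ∉ Set.range e, ∀ γ, X β γ = 0)
    (hcol : ∀ γ ∉ Set.range e, ∀ β, X β γ = 0) :
    X = blockInclusion R e * T * (blockInclusion R e)ᵀ := by
  ext β γ
  rw [Matrix.mul_assoc]
  by_cases hβ : β ∈ Set.range e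
  · obtain ⟨b, rfl⟩ := hβ
    rw [blockInclusion_mul_apply he]
    rw [← Matrix.transpose_apply (T * _), Matrix.transpose_mul, Matrix.transpose_transpose]
    by_cases hγ : γ ∈ Set.range e
    · obtain ⟨c, rfl⟩ := hγ
      rw [hX, blockInclusion_mul_apply he, Matrix.transpose_apply]
    · rw [hcol γ hγ, blockInclusion_mul_apply_of_notMem_range _ hγ]
  · rw [hrow β hβ, blockInclusion_mul_apply_of_notMem_range _ hβ]

variable [Fintype κ] [DecidableEq ι]

/-- The rank-one term of `M * Q` dies against `N⁻¹ * T` because `v ᵥ* T = 0`; hence `M` maps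
`Q * (N⁻¹ * T)` to `s • (Q * T)` without `N` having to be an orthogonal block of `M`. -/
theorem trace_inv_mul_smul_eq_of_mul_eq {M : Matrix κ κ R} {N T : Matrix ι ι R}
    {Q : Matrix κ ι R} {P : Matrix ι κ R} {s : R} {w : κ → R} {v : ι → R}
    (hM : IsUnit M.det) (hN : IsUnit N.det) (hPQ : P * Q = 1)
    (hMQ : M * Q = s • (Q * N) + vecMulVec w (v ᵥ* N)) (hT : v ᵥ* T = 0) :
    (M⁻¹ * (s • (Q * T * P))).trace = (N⁻¹ * T).trace := by
  have hzero : vecMulVec w (0 : ι → R) = 0 := by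
    ext
    simp [vecMulVec]
  have hsolve : M * (Q * (N⁻¹ * T)) = s • (Q * T) := by
    rw [← Matrix.mul_assoc, hMQ, Matrix.add_mul, Matrix.smul_mul, Matrix.mul_assoc,
      Matrix.mul_nonsing_inv_cancel_left _ _ hN, Matrix.vecMulVec_mul, Matrix.vecMul_vecMul,
      Matrix.mul_nonsing_inv_cancel_left _ _ hN, hT, hzero, add_zero]
  calc (M⁻¹ * (s • (Q * T * P))).trace = (M⁻¹ * (M * (Q * (N⁻¹ * T)) * P)).trace := by
        rw [hsolve, Matrix.smul_mul]
    _ = (Q * (N⁻¹ * T) * P).trace := by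
        rw [Matrix.mul_assoc M, Matrix.nonsing_inv_mul_cancel_left _ _ hM]
    _ = (N⁻¹ * T).trace := by
        rw [Matrix.trace_mul_comm, ← Matrix.mul_assoc, hPQ, Matrix.one_mul]

end BlockInclusion

/-! ### Block products -/

section BlockProduct

variable {ι₁ ι₂ κ : Type*} [Fintype ι₁] [DecidableEq ι₁] [Fintype ι₂] [DecidableEq ι₂] [Fintype κ]
  [DecidableEq κ]

/-- `F` is a product of the Finsler metrics `F₁` and `F₂` in the sense that `F² = f (F₁², F₂²)`,
where `F₁` and `F₂` act on two complementary blocks of coordinates. The blocks are given by index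
maps rather than by a sum type so that the two factors can be exchanged, and the formula for `F²`
is only required where both blocks of `y` are nonzero. -/
structure IsBlockProduct (e₁ : ι₁ → κ) (e₂ : ι₂ → κ) (U : Set (κ → ℝ)) (U₁ : Set (ι₁ → ℝ))
    (U₂ : Set (ι₂ → ℝ)) (F : (κ → ℝ) → (κ → ℝ) → ℝ) (F₁ : (ι₁ → ℝ) → (ι₁ → ℝ) → ℝ)
    (F₂ : (ι₂ → ℝ) → (ι₂ → ℝ) → ℝ) (f : ℝ → ℝ → ℝ) : Prop where
  injective₁ : Injective e₁
  injective₂ : Injective e₂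
  isCompl_range : IsCompl (Set.range e₁) (Set.range e₂)
  finsler : IsFinslerMetric U F
  finsler₁ : IsFinslerMetric U₁ F₁
  finsler₂ : IsFinslerMetric U₂ F₂
  mapsTo₁ : Set.MapsTo (· ∘ e₁) U U₁
  mapsTo₂ : Set.MapsTo (· ∘ e₂) U U₂
  contDiffOn : ContDiffOn ℝ 2 (uncurry f) (Set.Ioi 0 ×ˢ Set.Ioi 0)
  energy_eq : ∀ x ∈ U, ∀ y : κ → ℝ, y ∘ e₁ ≠ 0 → y ∘ e₂ ≠ 0 →
    energy F x y = f (blockPullback e₁ (energy F₁) x y) (blockPullback e₂ (energy F₂) x y)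

namespace IsBlockProduct

variable {e₁ : ι₁ → κ} {e₂ : ι₂ → κ} {U : Set (κ → ℝ)} {U₁ : Set (ι₁ → ℝ)} {U₂ : Set (ι₂ → ℝ)}
  {F : (κ → ℝ) → (κ → ℝ) → ℝ} {F₁ : (ι₁ → ℝ) → (ι₁ → ℝ) → ℝ} {F₂ : (ι₂ → ℝ) → (ι₂ → ℝ) → ℝ}
  {f : ℝ → ℝ → ℝ} {x y : κ → ℝ}

protected theorem symm (h : IsBlockProduct e₁ e₂ U U₁ U₂ F F₁ F₂ f) :
    IsBlockProduct e₂ e₁ U U₂ U₁ F F₂ F₁ (flip f) where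
  injective₁ := h.injective₂
  injective₂ := h.injective₁
  isCompl_range := h.isCompl_range.symm
  finsler := h.finsler
  finsler₁ := h.finsler₂
  finsler₂ := h.finsler₁
  mapsTo₁ := h.mapsTo₂
  mapsTo₂ := h.mapsTo₁
  contDiffOn := h.contDiffOn.comp (contDiff_snd.prodMk contDiff_fst).contDiffOn
    fun _ hp => ⟨hp.2, hp.1⟩
  energy_eq x hx y hy₂ hy₁ := h.energy_eq x hx y hy₁ hy₂

theorem notMem_range₁ (h : IsBlockProduct e₁ e₂ U U₁ U₂ F F₁ F₂ f) (i' : ι₂) :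
    e₂ i' ∉ Set.range e₁ :=
  h.isCompl_range.symm.disjoint.notMem_of_mem_left (Set.mem_range_self i')

theorem mem_range_or (h : IsBlockProduct e₁ e₂ U U₁ U₂ F F₁ F₂ f) (α : κ) :
    α ∈ Set.range e₁ ∨ α ∈ Set.range e₂ :=
  h.isCompl_range.codisjoint.top_le (Set.mem_univ α)

theorem eventually_mem (h : IsBlockProduct e₁ e₂ U U₁ U₂ F F₁ F₂ f) (hx : x ∈ U)
    (hy₁ : y ∘ e₁ ≠ 0) (hy₂ : y ∘ e₂ ≠ 0) :
    ∀ᶠ p : (κ → ℝ) × (κ → ℝ) in 𝓝 (x, y), p.1 ∈ U ∧ p.2 ∘ e₁ ≠ 0 ∧ p.2 ∘ e₂ ≠ 0 := by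
  have hcont₁ : Continuous fun p : (κ → ℝ) × (κ → ℝ) => p.2 ∘ e₁ := by fun_prop
  have hcont₂ : Continuous fun p : (κ → ℝ) × (κ → ℝ) => p.2 ∘ e₂ := by fun_prop
  exact (continuousAt_fst.eventually (h.finsler.isOpen.mem_nhds hx)).and <|
    (hcont₁.continuousAt.eventually_ne hy₁).and (hcont₂.continuousAt.eventually_ne hy₂)

theorem contDiffAt_blockPullback_energy (h : IsBlockProduct e₁ e₂ U U₁ U₂ F F₁ F₂ f) (hx : x ∈ U)
    (hy₁ : y ∘ e₁ ≠ 0) : ContDiffAt ℝ 2 (uncurry (blockPullback e₁ (energy F₁))) (x, y) :=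
  contDiffAt_blockPullback <|
    (h.finsler₁.contDiffAt_energy (h.mapsTo₁ hx) hy₁).of_le ENat.LEInfty.out

theorem contDiffAt_productFunction (h : IsBlockProduct e₁ e₂ U U₁ U₂ F F₁ F₂ f) (hx : x ∈ U)
    (hy₁ : y ∘ e₁ ≠ 0) (hy₂ : y ∘ e₂ ≠ 0) :
    ContDiffAt ℝ 2 (uncurry f)
      (blockPullback e₁ (energy F₁) x y, blockPullback e₂ (energy F₂) x y) :=
  h.contDiffOn.contDiffAt <| (isOpen_Ioi.prod isOpen_Ioi).mem_nhds
    ⟨pow_pos (h.finsler₁.pos _ (h.mapsTo₁ hx) _ hy₁) 2,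
      pow_pos (h.finsler₂.pos _ (h.mapsTo₂ hx) _ hy₂) 2⟩

theorem eventuallyEq_energy (h : IsBlockProduct e₁ e₂ U U₁ U₂ F F₁ F₂ f) (hx : x ∈ U)
    (hy₁ : y ∘ e₁ ≠ 0) (hy₂ : y ∘ e₂ ≠ 0) :
    uncurry (energy F) =ᶠ[𝓝 (x, y)] uncurry fun x y =>
      f (blockPullback e₁ (energy F₁) x y) (blockPullback e₂ (energy F₂) x y) := by
  filter_upwards [h.eventually_mem hx hy₁ hy₂] with p ⟨hpx, hpy₁, hpy₂⟩
    using h.energy_eq p.1 hpx p.2 hpy₁ hpy₂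

section Spray

theorem isEulerLagrange_blockPullback_energy (h : IsBlockProduct e₁ e₂ U U₁ U₂ F F₁ F₂ f)
    (hx : x ∈ U) (hy₁ : y ∘ e₁ ≠ 0) {a : κ → ℝ}
    (ha : a ∘ e₁ = fun i => -2 * spray F₁ i (x ∘ e₁) (y ∘ e₁)) :
    IsEulerLagrange (blockPullback e₁ (energy F₁)) x y a :=
  .blockPullback h.injective₁ <|
    (h.finsler₁.isEulerLagrange_energy_iff (h.mapsTo₁ hx) hy₁).2 ha

theorem semisprayDeriv_blockPullback_energy (h : IsBlockProduct e₁ e₂ U U₁ U₂ F F₁ F₂ f)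
    (hx : x ∈ U) (hy₁ : y ∘ e₁ ≠ 0) {a : κ → ℝ}
    (ha : a ∘ e₁ = fun i => -2 * spray F₁ i (x ∘ e₁) (y ∘ e₁)) :
    semisprayDeriv (blockPullback e₁ (energy F₁)) x y a = 0 := by
  have hx₁ := h.mapsTo₁ hx
  rw [semisprayDeriv_blockPullback h.injective₁]
  exact ((h.finsler₁.isEulerLagrange_energy_iff hx₁ hy₁).2 ha).semisprayDeriv_eq_zero
    (by norm_num) h.finsler₁.isPosHomogeneousOn_energy (h.finsler₁.isOpen.mem_nhds hx₁)
    ((h.finsler₁.contDiffAt_energy hx₁ hy₁).of_le ENat.LEInfty.out)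

theorem isEulerLagrange_energy (h : IsBlockProduct e₁ e₂ U U₁ U₂ F F₁ F₂ f) (hx : x ∈ U)
    (hy₁ : y ∘ e₁ ≠ 0) (hy₂ : y ∘ e₂ ≠ 0) {a : κ → ℝ}
    (ha₁ : a ∘ e₁ = fun i => -2 * spray F₁ i (x ∘ e₁) (y ∘ e₁))
    (ha₂ : a ∘ e₂ = fun i' => -2 * spray F₂ i' (x ∘ e₂) (y ∘ e₂)) :
    IsEulerLagrange (energy F) x y a :=
  IsEulerLagrange.congr (.comp₂ (h.contDiffAt_productFunction hx hy₁ hy₂)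
      (h.isEulerLagrange_blockPullback_energy hx hy₁ ha₁)
      (h.contDiffAt_blockPullback_energy hx hy₁)
      (h.semisprayDeriv_blockPullback_energy hx hy₁ ha₁)
      (h.symm.isEulerLagrange_blockPullback_energy hx hy₂ ha₂)
      (h.symm.contDiffAt_blockPullback_energy hx hy₂)
      (h.symm.semisprayDeriv_blockPullback_energy hx hy₂ ha₂))
    (h.eventuallyEq_energy hx hy₁ hy₂).symm

theorem spray_eq (h : IsBlockProduct e₁ e₂ U U₁ U₂ F F₁ F₂ f) (hx : x ∈ U)
    (hy₁ : y ∘ e₁ ≠ 0) (hy₂ : y ∘ e₂ ≠ 0) (i : ι₁) :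
    spray F (e₁ i) x y = blockPullback e₁ (spray F₁ i) x y := by
  set a₁ : ι₁ → ℝ := fun i => -2 * spray F₁ i (x ∘ e₁) (y ∘ e₁)
  set a₂ : ι₂ → ℝ := fun i' => -2 * spray F₂ i' (x ∘ e₂) (y ∘ e₂)
  set a : κ → ℝ := extend e₁ a₁ (extend e₂ a₂ 0)
  have hae₁ : a ∘ e₁ = a₁ := extend_comp h.injective₁ _ _
  have hae₂ : a ∘ e₂ = a₂ := funext fun i' =>
    (extend_apply' _ _ _ (h.notMem_range₁ i')).trans (h.injective₂.extend_apply _ _ i')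
  have hy : y ≠ 0 := by rintro rfl; exact hy₁ rfl
  have haF : a = fun α => -2 * spray F α x y := (h.finsler.isEulerLagrange_energy_iff hx hy).1 <|
    h.isEulerLagrange_energy hx hy₁ hy₂ hae₁ hae₂
  have hi : -2 * spray F (e₁ i) x y = -2 * spray F₁ i (x ∘ e₁) (y ∘ e₁) :=
    (congrFun haF (e₁ i)).symm.trans (congrFun hae₁ i)
  exact mul_left_cancel₀ (by norm_num) hi

theorem eventuallyEq_spray (h : IsBlockProduct e₁ e₂ U U₁ U₂ F F₁ F₂ f) (hx : x ∈ U)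
    (hy₁ : y ∘ e₁ ≠ 0) (hy₂ : y ∘ e₂ ≠ 0) (i : ι₁) :
    uncurry (spray F (e₁ i)) =ᶠ[𝓝 (x, y)] uncurry (blockPullback e₁ (spray F₁ i)) := by
  filter_upwards [h.eventually_mem hx hy₁ hy₂] with p ⟨hpx, hpy₁, hpy₂⟩
    using h.spray_eq hpx hpy₁ hpy₂ i

end Spray

section Berwald

theorem berwaldCurv_eq_pdy_blockPullback (h : IsBlockProduct e₁ e₂ U U₁ U₂ F F₁ F₂ f) (hx : x ∈ U)
    (hy₁ : y ∘ e₁ ≠ 0) (hy₂ : y ∘ e₂ ≠ 0) (i : ι₁) (β γ η : κ) :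
    berwaldCurv F (e₁ i) β γ η x y
      = pdy (pdy (pdy (blockPullback e₁ (spray F₁ i)) η) γ) β x y :=
  (eventuallyEq_pdy (eventuallyEq_pdy (eventuallyEq_pdy
    (h.eventuallyEq_spray hx hy₁ hy₂ i) η) γ) β).eq_of_nhds

theorem berwaldCurv_eq (h : IsBlockProduct e₁ e₂ U U₁ U₂ F F₁ F₂ f) (hx : x ∈ U)
    (hy₁ : y ∘ e₁ ≠ 0) (hy₂ : y ∘ e₂ ≠ 0) (i j k l : ι₁) :
    berwaldCurv F (e₁ i) (e₁ j) (e₁ k) (e₁ l) x y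
      = berwaldCurv F₁ i j k l (x ∘ e₁) (y ∘ e₁) := by
  rw [h.berwaldCurv_eq_pdy_blockPullback hx hy₁ hy₂]
  simp only [pdy_blockPullback h.injective₁]
  rfl

theorem berwaldCurv_eq_zero (h : IsBlockProduct e₁ e₂ U U₁ U₂ F F₁ F₂ f) (hx : x ∈ U)
    (hy₁ : y ∘ e₁ ≠ 0) (hy₂ : y ∘ e₂ ≠ 0) (i : ι₁) {β γ η : κ}
    (hmem : β ∉ Set.range e₁ ∨ γ ∉ Set.range e₁ ∨ η ∉ Set.range e₁) :
    berwaldCurv F (e₁ i) β γ η x y = 0 := by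
  have he := h.injective₁
  rw [h.berwaldCurv_eq_pdy_blockPullback hx hy₁ hy₂]
  by_cases hη : η ∈ Set.range e₁
  · obtain ⟨l, rfl⟩ := hη
    rw [pdy_blockPullback he]
    by_cases hγ : γ ∈ Set.range e₁
    · obtain ⟨k, rfl⟩ := hγ
      rw [pdy_blockPullback he, pdy_blockPullback_of_notMem_range he (by simpa using hmem)]
      rfl
    · rw [pdy_blockPullback_of_notMem_range he hγ, pdy_zero]
      rfl
  · rw [pdy_blockPullback_of_notMem_range he hη, pdy_zero, pdy_zero]
    rfl

end Berwald

section Landsberg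

theorem eventuallyEq_pdy_energy (h : IsBlockProduct e₁ e₂ U U₁ U₂ F F₁ F₂ f) (hx : x ∈ U)
    (hy₁ : y ∘ e₁ ≠ 0) (hy₂ : y ∘ e₂ ≠ 0) (i : ι₁) :
    uncurry (pdy (energy F) (e₁ i)) =ᶠ[𝓝 (x, y)] uncurry fun x y =>
      pderivS f (blockPullback e₁ (energy F₁) x y) (blockPullback e₂ (energy F₂) x y)
        * blockPullback e₁ (pdy (energy F₁) i) x y := by
  have hi : e₁ i ∉ Set.range e₂ := h.symm.notMem_range₁ i
  refine (eventuallyEq_pdy (h.eventuallyEq_energy hx hy₁ hy₂) (e₁ i)).trans <|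
    (eventuallyEq_pdy_comp₂ ((h.contDiffAt_productFunction hx hy₁ hy₂).of_le one_le_two)
      ((h.contDiffAt_blockPullback_energy hx hy₁).of_le one_le_two)
      ((h.symm.contDiffAt_blockPullback_energy hx hy₂).of_le one_le_two) (e₁ i)).trans ?_
  simp only [pdy_blockPullback h.injective₁, pdy_blockPullback_of_notMem_range h.injective₂ hi,
    Pi.zero_apply, mul_zero, add_zero]
  rfl

theorem pdy_blockPullback_pdy_energy (h : IsBlockProduct e₁ e₂ U U₁ U₂ F F₁ F₂ f) (i : ι₁)
    (α : κ) : pdy (blockPullback e₁ (pdy (energy F₁) i)) α x y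
      = (blockInclusion ℝ e₁ * fundTensor F₁ (x ∘ e₁) (y ∘ e₁)) α i := by
  by_cases hα : α ∈ Set.range e₁
  · obtain ⟨a, rfl⟩ := hα
    rw [pdy_blockPullback h.injective₁, blockInclusion_mul_apply h.injective₁]
    rfl
  · rw [pdy_blockPullback_of_notMem_range h.injective₁ hα,
      blockInclusion_mul_apply_of_notMem_range _ hα]
    rfl

theorem exists_fundTensor_mul_blockInclusion (h : IsBlockProduct e₁ e₂ U U₁ U₂ F F₁ F₂ f)
    (hx : x ∈ U) (hy₁ : y ∘ e₁ ≠ 0) (hy₂ : y ∘ e₂ ≠ 0) :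
    ∃ w : κ → ℝ, fundTensor F x y * blockInclusion ℝ e₁ =
      pderivS f (blockPullback e₁ (energy F₁) x y) (blockPullback e₂ (energy F₂) x y) •
        (blockInclusion ℝ e₁ * fundTensor F₁ (x ∘ e₁) (y ∘ e₁))
      + vecMulVec w ((y ∘ e₁) ᵥ* fundTensor F₁ (x ∘ e₁) (y ∘ e₁)) := by
  set S : (κ → ℝ) → (κ → ℝ) → ℝ := fun x y =>
    pderivS f (blockPullback e₁ (energy F₁) x y) (blockPullback e₂ (energy F₂) x y)
  have hx₁ := h.mapsTo₁ hx
  have hS : DifferentiableAt ℝ (uncurry S) (x, y) := differentiableAt_comp₂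
    ((contDiffAt_pderivS (m := 1) (h.contDiffAt_productFunction hx hy₁ hy₂)
      (by norm_num)).differentiableAt one_ne_zero)
    ((h.contDiffAt_blockPullback_energy hx hy₁).differentiableAt two_ne_zero)
    ((h.symm.contDiffAt_blockPullback_energy hx hy₂).differentiableAt two_ne_zero)
  have hP : ∀ i, DifferentiableAt ℝ (uncurry (blockPullback e₁ (pdy (energy F₁) i))) (x, y) :=
    fun i => (contDiffAt_blockPullback
      (h.finsler₁.contDiffAt_pdy_energy hx₁ hy₁ i)).differentiableAt (by simp)
  refine ⟨fun α => pdy S α x y, ?_⟩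
  ext α i
  have hentry : fundTensor F x y α (e₁ i)
      = S x y * pdy (blockPullback e₁ (pdy (energy F₁) i)) α x y
        + blockPullback e₁ (pdy (energy F₁) i) x y * pdy S α x y :=
    (eventuallyEq_pdy (h.eventuallyEq_pdy_energy hx hy₁ hy₂ i) α).eq_of_nhds.trans
      (pdy_mul hS (hP i) α)
  rw [mul_blockInclusion, h.finsler₁.vecMul_fundTensor hx₁ hy₁, Matrix.add_apply,
    Matrix.smul_apply, ← h.pdy_blockPullback_pdy_energy i α, vecMulVec_apply,
    mul_comm (pdy S α x y)]
  exact hentry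

theorem landsbergCurv_eq_mul_sum (h : IsBlockProduct e₁ e₂ U U₁ U₂ F F₁ F₂ f) (hx : x ∈ U)
    (hy₁ : y ∘ e₁ ≠ 0) (hy₂ : y ∘ e₂ ≠ 0) (i : ι₁) (β γ : κ) :
    landsbergCurv F (e₁ i) β γ x y =
      pderivS f (blockPullback e₁ (energy F₁) x y) (blockPullback e₂ (energy F₂) x y)
        * (-(1 / 4) * ∑ a, pdy (energy F₁) a (x ∘ e₁) (y ∘ e₁)
          * berwaldCurv F (e₁ a) (e₁ i) β γ x y) := by
  have hy : y ≠ 0 := by rintro rfl; exact hy₁ rfl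
  rw [h.finsler.landsbergCurv_eq hx hy, mul_left_comm]
  congr 1
  rw [Finset.mul_sum]
  refine (Fintype.sum_of_injective e₁ h.injective₁ _ _ (fun α hα => ?_) fun a => ?_).symm
  · obtain ⟨a', rfl⟩ := (h.mem_range_or α).resolve_left hα
    rw [h.symm.berwaldCurv_eq_zero hx hy₂ hy₁ a' (.inl (h.symm.notMem_range₁ i)), mul_zero]
  · have hpdy := (h.eventuallyEq_pdy_energy hx hy₁ hy₂ a).eq_of_nhds
    simp only [uncurry_apply_pair] at hpdy
    rw [hpdy, mul_assoc]
    rfl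

theorem landsbergMatrix_eq (h : IsBlockProduct e₁ e₂ U U₁ U₂ F F₁ F₂ f) (hx : x ∈ U)
    (hy₁ : y ∘ e₁ ≠ 0) (hy₂ : y ∘ e₂ ≠ 0) (i : ι₁) :
    landsbergMatrix F (e₁ i) x y =
      pderivS f (blockPullback e₁ (energy F₁) x y) (blockPullback e₂ (energy F₂) x y) •
        (blockInclusion ℝ e₁ * landsbergMatrix F₁ i (x ∘ e₁) (y ∘ e₁)
          * (blockInclusion ℝ e₁)ᵀ) := by
  rw [← Matrix.smul_mul, ← Matrix.mul_smul]
  refine eq_blockInclusion_mul_mul_transpose h.injective₁ (fun b c => ?_)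
    (fun β hβ γ => ?_) fun γ hγ β => ?_
  · rw [Matrix.smul_apply, smul_eq_mul]
    simp only [landsbergMatrix, h.landsbergCurv_eq_mul_sum hx hy₁ hy₂,
      h.berwaldCurv_eq hx hy₁ hy₂, h.finsler₁.landsbergCurv_eq (h.mapsTo₁ hx) hy₁]
  · simp [landsbergMatrix, h.landsbergCurv_eq_mul_sum hx hy₁ hy₂,
      h.berwaldCurv_eq_zero hx hy₁ hy₂ _ (.inr (.inl hβ))]
  · simp [landsbergMatrix, h.landsbergCurv_eq_mul_sum hx hy₁ hy₂,
      h.berwaldCurv_eq_zero hx hy₁ hy₂ _ (.inr (.inr hγ))]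

theorem meanLandsbergCurv_eq (h : IsBlockProduct e₁ e₂ U U₁ U₂ F F₁ F₂ f) (hx : x ∈ U)
    (hy₁ : y ∘ e₁ ≠ 0) (hy₂ : y ∘ e₂ ≠ 0) (i : ι₁) :
    meanLandsbergCurv F (e₁ i) x y = meanLandsbergCurv F₁ i (x ∘ e₁) (y ∘ e₁) := by
  have hy : y ≠ 0 := by rintro rfl; exact hy₁ rfl
  have hx₁ := h.mapsTo₁ hx
  obtain ⟨w, hw⟩ := h.exists_fundTensor_mul_blockInclusion hx hy₁ hy₂
  rw [h.finsler.meanLandsbergCurv_eq_trace hx hy, h.finsler₁.meanLandsbergCurv_eq_trace hx₁ hy₁,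
    h.landsbergMatrix_eq hx hy₁ hy₂,
    trace_inv_mul_smul_eq_of_mul_eq (h.finsler.isUnit_det_fundTensor hx hy)
      (h.finsler₁.isUnit_det_fundTensor hx₁ hy₁)
      (transpose_blockInclusion_mul_self h.injective₁) hw
      (h.finsler₁.vecMul_landsbergMatrix hx₁ hy₁ i)]

end Landsberg

end IsBlockProduct

end BlockProduct

theorem meanLandsbergCurv_of_minkowskian_product_general {ι₁ ι₂ κ : Type*} [Fintype ι₁]
    [DecidableEq ι₁] [Fintype ι₂] [DecidableEq ι₂] [Fintype κ] [DecidableEq κ]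
    {e₁ : ι₁ → κ} {e₂ : ι₂ → κ} {U : Set (κ → ℝ)} {U₁ : Set (ι₁ → ℝ)} {U₂ : Set (ι₂ → ℝ)}
    {F : (κ → ℝ) → (κ → ℝ) → ℝ} {F₁ : (ι₁ → ℝ) → (ι₁ → ℝ) → ℝ} {F₂ : (ι₂ → ℝ) → (ι₂ → ℝ) → ℝ}
    {f : ℝ → ℝ → ℝ} (h : IsBlockProduct e₁ e₂ U U₁ U₂ F F₁ F₂ f)
    {x : κ → ℝ} (hx : x ∈ U) {y : κ → ℝ} (hy₁ : y ∘ e₁ ≠ 0) (hy₂ : y ∘ e₂ ≠ 0) :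
    (∀ i, meanLandsbergCurv F (e₁ i) x y = meanLandsbergCurv F₁ i (x ∘ e₁) (y ∘ e₁)) ∧
      ∀ i', meanLandsbergCurv F (e₂ i') x y = meanLandsbergCurv F₂ i' (x ∘ e₂) (y ∘ e₂) :=
  ⟨h.meanLandsbergCurv_eq hx hy₁ hy₂, h.symm.meanLandsbergCurv_eq hx hy₂ hy₁⟩

theorem IsMinkowskianProduct.isBlockProduct {m n : ℕ} {U₁ : Set (Fin m → ℝ)}
    {U₂ : Set (Fin n → ℝ)} {F₁ : (Fin m → ℝ) → (Fin m → ℝ) → ℝ}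
    {F₂ : (Fin n → ℝ) → (Fin n → ℝ) → ℝ} {f : ℝ → ℝ → ℝ}
    {F : (Fin m ⊕ Fin n → ℝ) → (Fin m ⊕ Fin n → ℝ) → ℝ}
    (h : IsMinkowskianProduct U₁ U₂ F₁ F₂ f F) :
    IsBlockProduct Sum.inl Sum.inr {x | x ∘ Sum.inl ∈ U₁ ∧ x ∘ Sum.inr ∈ U₂} U₁ U₂ F F₁ F₂ f where
  injective₁ := Sum.inl_injective
  injective₂ := Sum.inr_injective
  isCompl_range := Set.isCompl_range_inl_range_inr
  finsler := h.finsler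
  finsler₁ := h.finsler₁
  finsler₂ := h.finsler₂
  mapsTo₁ _ hx := hx.1
  mapsTo₂ _ hx := hx.2
  contDiffOn := h.f_smooth.of_le ENat.LEInfty.out
  energy_eq x _ y _ _ := by
    rw [energy, h.F_def]
    exact Real.sq_sqrt <|
      h.f_nonneg _ (Set.mem_Ici.2 (sq_nonneg _)) _ (Set.mem_Ici.2 (sq_nonneg _))

end

/-- The mean Landsberg curvature of a Minkowskian product Finsler metric splits:
`J_i = J¹_i` on the first block and `J_{i'} = J²_{i'}` on the second block. -/
theorem meanLandsbergCurv_of_minkowskian_product {m n : ℕ}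
    (U₁ : Set (Fin m → ℝ)) (U₂ : Set (Fin n → ℝ))
    (F₁ : (Fin m → ℝ) → (Fin m → ℝ) → ℝ) (F₂ : (Fin n → ℝ) → (Fin n → ℝ) → ℝ)
    (f : ℝ → ℝ → ℝ) (F : (Fin m ⊕ Fin n → ℝ) → (Fin m ⊕ Fin n → ℝ) → ℝ)
    (hprod : IsMinkowskianProduct U₁ U₂ F₁ F₂ f F) :
    ∀ x : Fin m ⊕ Fin n → ℝ, (x ∘ Sum.inl) ∈ U₁ → (x ∘ Sum.inr) ∈ U₂ →
    ∀ y : Fin m ⊕ Fin n → ℝ, (y ∘ Sum.inl) ≠ 0 → (y ∘ Sum.inr) ≠ 0 →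
      (∀ i : Fin m,
        meanLandsbergCurv F (Sum.inl i) x y =
          meanLandsbergCurv F₁ i (x ∘ Sum.inl) (y ∘ Sum.inl)) ∧
      (∀ i' : Fin n,
        meanLandsbergCurv F (Sum.inr i') x y =
          meanLandsbergCurv F₂ i' (x ∘ Sum.inr) (y ∘ Sum.inr)) :=
  fun _ hx₁ hx₂ _ hy₁ hy₂ =>
    meanLandsbergCurv_of_minkowskian_product_general hprod.isBlockProduct ⟨hx₁, hx₂⟩ hy₁ hy₂
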